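/- Let φ : ℝ → ℝ be differentiable with φ(0) = 0 and φ'(u) = √(c² + 2·cos θ·B(u) − D²·B(u)²) for all u, where B(u) = λ₁²·cos²(φ u) + λ₂²·sin²(φ u) and D = sin θ / c, let U > 0 satisfy φ(u + U) = φ(u) + π for all u, and define G : ℝ → ℝ by G(u) = ∫₀^u (c − φ'(s))/B(s) ds. Then: (1) G is odd, i.e. G(−u) = −G(u) for all u; (2) G(u + U) = G(u) + G(U) for all u ∈ ℝ; (3) G(k·U) = k·G(U) for every integer k. -/

import Mathlib

open Real

/-- The critical angle `θ_c⁺`. -/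
noncomputable def thetaPlus (l1 c : ℝ) : ℝ :=
  if c > Real.sqrt 2 * l1 then π else Real.arccos (1 - c ^ 2 / l1 ^ 2)

/-- The quantity `B(u) = λ₁² cos²(φ u) + λ₂² sin²(φ u)`. -/
noncomputable def Bfun (l1 l2 : ℝ) (φ : ℝ → ℝ) (u : ℝ) : ℝ :=
  l1 ^ 2 * Real.cos (φ u) ^ 2 + l2 ^ 2 * Real.sin (φ u) ^ 2

/-- The function `G(u) = ∫₀^u (c - φ'(s))/B(s) ds`. -/
noncomputable def Gfun (l1 l2 c : ℝ) (φ : ℝ → ℝ) (u : ℝ) : ℝ :=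
  ∫ s in (0 : ℝ)..u, (c - deriv φ s) / Bfun l1 l2 φ s

/-!
The function `φ` solves an autonomous equation `φ' = f(φ)` whose right-hand side `f` is even and,
because `|θ| < θ_c⁺`, positive: the radicand factors as
`(c² + (1 + cos θ) B) (c² - (1 - cos θ) B) / c²`, and the bound on `θ` says
`(1 - cos θ) λ₁² < c²`. Separation of variables then gives uniqueness. As `u ↦ -φ (-u)` is a
solution with the same initial value, `φ` is odd. Hence the integrand of `G` is even, and it is
`U`-periodic because `B` is `π`-periodic in `φ`.
-/

section AutonomousODE

variable {f φ ψ : ℝ → ℝ}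

theorem eq_of_integral_eq_zero_of_ne_zero {g : ℝ → ℝ} (hg : Continuous g) (hg0 : ∀ x, g x ≠ 0)
    {a b : ℝ} (hab : ∫ x in a..b, g x = 0) : a = b := by
  wlog hle : a ≤ b generalizing a b
  · exact (this (by rw [intervalIntegral.integral_symm, hab, neg_zero]) (le_of_not_ge hle)).symm
  by_contra hne
  have hcont : Continuous fun u ↦ ∫ x in a..u, g x :=
    intervalIntegral.continuous_primitive (fun _ _ ↦ hg.intervalIntegrable _ _) a
  obtain ⟨x, -, hx⟩ := exists_deriv_eq_zero (hle.lt_of_ne hne) hcont.continuousOn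
    (by rw [intervalIntegral.integral_same, hab])
  exact hg0 x (by rwa [hg.deriv_integral] at hx)

theorem integral_inv_eq_sub_of_hasDerivAt (hf : Continuous f) (hf0 : ∀ x, f x ≠ 0)
    (hφ : ∀ u, HasDerivAt φ (f (φ u)) u) (s t : ℝ) :
    ∫ x in φ s..φ t, (f x)⁻¹ = t - s := by
  have hφc : Continuous φ := continuous_iff_continuousAt.2 fun u ↦ (hφ u).continuousAt
  calc ∫ x in φ s..φ t, (f x)⁻¹
      = ∫ u in s..t, (f (φ u))⁻¹ * f (φ u) :=
        (intervalIntegral.integral_comp_mul_deriv (fun u _ ↦ hφ u)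
          (hf.comp hφc).continuousOn (hf.inv₀ hf0)).symm
    _ = ∫ _ in s..t, (1 : ℝ) := by simp only [inv_mul_cancel₀ (hf0 _)]
    _ = t - s := integral_one

theorem eq_of_hasDerivAt_autonomous (hf : Continuous f) (hf0 : ∀ x, f x ≠ 0)
    (hφ : ∀ u, HasDerivAt φ (f (φ u)) u) (hψ : ∀ u, HasDerivAt ψ (f (ψ u)) u)
    {t₀ : ℝ} (h₀ : φ t₀ = ψ t₀) : φ = ψ := by
  funext t
  have hint (a b : ℝ) : IntervalIntegrable (fun x ↦ (f x)⁻¹) MeasureTheory.volume a b :=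
    (hf.inv₀ hf0).intervalIntegrable a b
  refine eq_of_integral_eq_zero_of_ne_zero (hf.inv₀ hf0) (fun x ↦ inv_ne_zero (hf0 x)) ?_
  calc ∫ x in φ t..ψ t, (f x)⁻¹
      = (∫ x in φ t..φ t₀, (f x)⁻¹) + ∫ x in ψ t₀..ψ t, (f x)⁻¹ := by
        rw [h₀, intervalIntegral.integral_add_adjacent_intervals (hint _ _) (hint _ _)]
    _ = (t₀ - t) + (t - t₀) := by
        rw [integral_inv_eq_sub_of_hasDerivAt hf hf0 hφ,
          integral_inv_eq_sub_of_hasDerivAt hf hf0 hψ]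
    _ = 0 := by ring

theorem odd_of_hasDerivAt_autonomous (hf : Continuous f) (hf0 : ∀ x, f x ≠ 0)
    (hfe : f.Even) (hφ : ∀ u, HasDerivAt φ (f (φ u)) u) (hφ0 : φ 0 = 0) : φ.Odd := by
  have hreflect (u : ℝ) : HasDerivAt (fun v ↦ -φ (-v)) (f (-φ (-u))) u := by
    rw [hfe.eq]
    exact ((hφ (-u)).comp u (hasDerivAt_neg u)).neg.congr_deriv (by ring)
  have hfix : φ = fun v ↦ -φ (-v) :=
    eq_of_hasDerivAt_autonomous hf hf0 hφ hreflect (t₀ := 0) (by simp [hφ0])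
  exact fun u ↦ neg_eq_iff_eq_neg.1 (congrFun hfix u).symm

end AutonomousODE

section Symmetry

variable {E : Type*} [NormedAddCommGroup E] [NormedSpace ℝ E]

theorem odd_integral_of_even {f : ℝ → E} (hf : f.Even) :
    Function.Odd fun u ↦ ∫ s in (0 : ℝ)..u, f s := fun u ↦ by
  have h := intervalIntegral.integral_comp_neg f (a := 0) (b := u)
  simp only [hf.eq, neg_zero] at h
  simp only [h, intervalIntegral.integral_symm (-u) 0]

theorem even_deriv_of_odd {f : ℝ → E} (hf : f.Odd) : (deriv f).Even := fun u ↦ by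
  have h : deriv (fun v ↦ f (-v)) u = -deriv f u := by simp only [hf.eq, deriv.fun_neg]
  rwa [deriv_comp_neg, neg_inj] at h

theorem periodic_deriv_of_add_const {f : ℝ → E} {T : ℝ} {a : E}
    (hf : ∀ u, f (u + T) = f u + a) : Function.Periodic (deriv f) T := fun u ↦ by
  rw [← deriv_comp_add_const, funext hf, deriv_add_const]

end Symmetry

section Bfun

variable {l1 l2 U : ℝ} {φ : ℝ → ℝ}

theorem Bfun_pos (hl1 : l1 ≠ 0) (hl2 : l2 ≠ 0) (u : ℝ) : 0 < Bfun l1 l2 φ u := by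
  unfold Bfun
  by_cases hcos : cos (φ u) = 0
  · have hsin : sin (φ u) ^ 2 = 1 := by simpa [hcos] using sin_sq_add_cos_sq (φ u)
    rw [hsin]
    positivity
  · positivity

theorem Bfun_le_sq (hl : l2 ^ 2 ≤ l1 ^ 2) (u : ℝ) : Bfun l1 l2 φ u ≤ l1 ^ 2 :=
  calc l1 ^ 2 * cos (φ u) ^ 2 + l2 ^ 2 * sin (φ u) ^ 2
      ≤ l1 ^ 2 * cos (φ u) ^ 2 + l1 ^ 2 * sin (φ u) ^ 2 := by gcongr
    _ = l1 ^ 2 := by rw [← mul_add, cos_sq_add_sin_sq, mul_one]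

theorem continuous_Bfun (hφ : Continuous φ) : Continuous (Bfun l1 l2 φ) := by
  unfold Bfun
  fun_prop

theorem even_Bfun (hφ : φ.Odd) : (Bfun l1 l2 φ).Even := fun u ↦ by
  simp only [Bfun, hφ.eq, cos_neg, sin_neg, neg_sq]

theorem periodic_Bfun (hφ : ∀ u, φ (u + U) = φ u + π) :
    Function.Periodic (Bfun l1 l2 φ) U := fun u ↦ by
  simp only [Bfun, hφ, cos_add_pi, sin_add_pi, neg_sq]

end Bfun

section Gfun

variable {l1 l2 c U : ℝ} {φ : ℝ → ℝ}

theorem odd_Gfun (hφ : φ.Odd) : (Gfun l1 l2 c φ).Odd :=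
  odd_integral_of_even fun u ↦ by rw [even_deriv_of_odd hφ, even_Bfun hφ]

theorem intervalIntegrable_Gfun_integrand (hl1 : l1 ≠ 0) (hl2 : l2 ≠ 0) (hφ : ContDiff ℝ 1 φ)
    (a b : ℝ) :
    IntervalIntegrable (fun s ↦ (c - deriv φ s) / Bfun l1 l2 φ s) MeasureTheory.volume a b :=
  ((continuous_const.sub hφ.continuous_deriv_one).div (continuous_Bfun hφ.continuous)
    fun u ↦ (Bfun_pos hl1 hl2 u).ne').intervalIntegrable a b

theorem periodic_Gfun_integrand (hφU : ∀ u, φ (u + U) = φ u + π) :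
    Function.Periodic (fun s ↦ (c - deriv φ s) / Bfun l1 l2 φ s) U := fun u ↦ by
  simp only [periodic_deriv_of_add_const hφU u, periodic_Bfun hφU u]

theorem Gfun_add_period (hl1 : l1 ≠ 0) (hl2 : l2 ≠ 0) (hφ : ContDiff ℝ 1 φ)
    (hφU : ∀ u, φ (u + U) = φ u + π) (u : ℝ) :
    Gfun l1 l2 c φ (u + U) = Gfun l1 l2 c φ u + Gfun l1 l2 c φ U := by
  simpa only [zero_add] using!
    (periodic_Gfun_integrand hφU).intervalIntegral_add_eq_add 0 u
      (intervalIntegrable_Gfun_integrand hl1 hl2 hφ)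

theorem Gfun_int_mul_period (hl1 : l1 ≠ 0) (hl2 : l2 ≠ 0) (hφ : ContDiff ℝ 1 φ)
    (hφU : ∀ u, φ (u + U) = φ u + π) (k : ℤ) :
    Gfun l1 l2 c φ (k * U) = k * Gfun l1 l2 c φ U := by
  simpa only [zero_add, zsmul_eq_mul] using!
    (periodic_Gfun_integrand hφU).intervalIntegral_add_zsmul_eq k 0
      (intervalIntegrable_Gfun_integrand hl1 hl2 hφ)

end Gfun

section PhaseSpeed

variable {l1 l2 c θ : ℝ}

theorem sq_mul_one_sub_cos_lt_of_abs_lt_thetaPlus (hl1 : 0 < l1) (hc : 0 ≤ c)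
    (hθ : |θ| < thetaPlus l1 c) : l1 ^ 2 * (1 - cos θ) < c ^ 2 := by
  have hsq : (√2 * l1) ^ 2 = l1 ^ 2 * 2 := by rw [mul_pow, sq_sqrt zero_le_two, mul_comm]
  rw [thetaPlus] at hθ
  split_ifs at hθ with hlarge
  · calc l1 ^ 2 * (1 - cos θ) ≤ l1 ^ 2 * 2 := by gcongr; linarith [neg_one_le_cos θ]
      _ = (√2 * l1) ^ 2 := hsq.symm
      _ < c ^ 2 := by gcongr
  · have hratio_le : c ^ 2 / l1 ^ 2 ≤ 2 := by
      rw [div_le_iff₀' (by positivity), ← hsq]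
      gcongr
      exact not_lt.1 hlarge
    have hratio_nonneg : 0 ≤ c ^ 2 / l1 ^ 2 := by positivity
    have hcos : 1 - c ^ 2 / l1 ^ 2 < cos θ := by
      have h := cos_lt_cos_of_nonneg_of_le_pi (abs_nonneg θ) (arccos_le_pi _) hθ
      rwa [cos_arccos (by linarith) (by linarith), cos_abs] at h
    rw [← lt_div_iff₀' (by positivity)]
    linarith

theorem radicand_eq_mul_div (hc : c ≠ 0) (b : ℝ) :
    c ^ 2 + 2 * cos θ * b - (sin θ / c) ^ 2 * b ^ 2 =
      (c ^ 2 + (1 + cos θ) * b) * (c ^ 2 - b * (1 - cos θ)) / c ^ 2 := by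
  rw [div_pow, sin_sq]
  field_simp
  ring

theorem radicand_pos {b : ℝ} (hc : c ≠ 0) (hb : 0 ≤ b) (hbc : b * (1 - cos θ) < c ^ 2) :
    0 < c ^ 2 + 2 * cos θ * b - (sin θ / c) ^ 2 * b ^ 2 := by
  have hcos : 0 ≤ 1 + cos θ := by linarith [neg_one_le_cos θ]
  rw [radicand_eq_mul_div hc]
  exact div_pos (mul_pos (by positivity) (sub_pos.2 hbc)) (by positivity)

/-- The right-hand side `f` of the autonomous equation `φ' = f(φ)`. The quantity `B` as a function
of the angle `x` itself is `Bfun l1 l2 id x`. -/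
noncomputable def phaseSpeed (l1 l2 c θ x : ℝ) : ℝ :=
  √(c ^ 2 + 2 * cos θ * Bfun l1 l2 id x - (sin θ / c) ^ 2 * Bfun l1 l2 id x ^ 2)

theorem continuous_phaseSpeed : Continuous (phaseSpeed l1 l2 c θ) := by
  have hB : Continuous (Bfun l1 l2 id) := continuous_Bfun continuous_id
  unfold phaseSpeed
  fun_prop

theorem even_phaseSpeed : (phaseSpeed l1 l2 c θ).Even := fun x ↦ by
  have hB : (Bfun l1 l2 id).Even := even_Bfun fun _ ↦ rfl
  simp only [phaseSpeed, hB.eq]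

theorem phaseSpeed_pos (hl2 : 0 < l2) (hl : l2 ≤ l1) (hc : 0 < c) (hθ : |θ| < thetaPlus l1 c)
    (x : ℝ) : 0 < phaseSpeed l1 l2 c θ x := by
  have hl1 : 0 < l1 := hl2.trans_le hl
  refine sqrt_pos.2 (radicand_pos hc.ne' (Bfun_pos hl1.ne' hl2.ne' x).le ?_)
  calc Bfun l1 l2 id x * (1 - cos θ)
      ≤ l1 ^ 2 * (1 - cos θ) :=
        mul_le_mul_of_nonneg_right (Bfun_le_sq (by gcongr) x) (sub_nonneg.2 (cos_le_one θ))
    _ < c ^ 2 := sq_mul_one_sub_cos_lt_of_abs_lt_thetaPlus hl1 hc.le hθ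

end PhaseSpeed

theorem catenoid_G_odd_quasiperiodic
    (l1 l2 c θ : ℝ) (hl : l1 ≥ l2) (hl2 : l2 > 0) (hc : c > 0)
    (hθ : |θ| < thetaPlus l1 c)
    (φ : ℝ → ℝ) (hφ : Differentiable ℝ φ) (hφ0 : φ 0 = 0)
    (hφ' : ∀ u, deriv φ u =
      Real.sqrt (c ^ 2 + 2 * Real.cos θ * Bfun l1 l2 φ u -
        (Real.sin θ / c) ^ 2 * Bfun l1 l2 φ u ^ 2))
    (U : ℝ) (hU : U > 0) (hφU : ∀ u, φ (u + U) = φ u + π) :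
    (∀ u, Gfun l1 l2 c φ (-u) = -Gfun l1 l2 c φ u) ∧
    (∀ u, Gfun l1 l2 c φ (u + U) = Gfun l1 l2 c φ u + Gfun l1 l2 c φ U) ∧
    (∀ k : ℤ, Gfun l1 l2 c φ (k * U) = k * Gfun l1 l2 c φ U) := by
  have hl1 : l1 ≠ 0 := (hl2.trans_le hl).ne'
  have hode : deriv φ = phaseSpeed l1 l2 c θ ∘ φ := funext hφ'
  have hφd (u : ℝ) : HasDerivAt φ (phaseSpeed l1 l2 c θ (φ u)) u :=
    (hφ u).hasDerivAt.congr_deriv (hφ' u)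
  have hφC1 : ContDiff ℝ 1 φ :=
    contDiff_one_iff_deriv.2 ⟨hφ, hode ▸ continuous_phaseSpeed.comp hφ.continuous⟩
  have hφodd : φ.Odd :=
    odd_of_hasDerivAt_autonomous continuous_phaseSpeed
      (fun x ↦ (phaseSpeed_pos hl2 hl hc hθ x).ne') even_phaseSpeed hφd hφ0
  exact ⟨odd_Gfun hφodd, Gfun_add_period hl1 hl2.ne' hφC1 hφU,
    Gfun_int_mul_period hl1 hl2.ne' hφC1 hφU⟩
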